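/- arXiv:2402.00991 — 2 statements merged into one kernel-verified Lean document; each statement's English description precedes it below -/
import Mathlib

section
/- Let R be a commutative ring, let f, g ∈ R, let (P, Q, T) be a 3-matrix factorization of f of size n (i.e., P, Q, T are n×n matrices over R with P * Q * T = f • I_n), and let (P', Q', T') be a 3-matrix factorization of g of size m. Then the componentwise Kronecker product (P ⊗ P', Q ⊗ Q', T ⊗ T') is a 3-matrix factorization of f*g of size n*m, i.e., (P ⊗ P') * (Q ⊗ Q') * (T ⊗ T') = (f*g) • I_{nm}. -/
open Matrix Kronecker

/-- The multiplicative tensor product of a 3-matrix factorization of `f` (size `n`)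
with a 3-matrix factorization of `g` (size `m`), taken componentwise via the
Kronecker product, is a 3-matrix factorization of `f * g` (size `n * m`). -/
theorem kronecker_three_matrix_factorization
    {R : Type*} [CommRing R] {n m : ℕ} (f g : R)
    (P Q T : Matrix (Fin n) (Fin n) R) (P' Q' T' : Matrix (Fin m) (Fin m) R)
    (hf : P * Q * T = f • (1 : Matrix (Fin n) (Fin n) R))
    (hg : P' * Q' * T' = g • (1 : Matrix (Fin m) (Fin m) R)) :
    (P ⊗ₖ P') * (Q ⊗ₖ Q') * (T ⊗ₖ T') =
      (f * g) • (1 : Matrix (Fin n × Fin m) (Fin n × Fin m) R) := by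
  rw [← mul_kronecker_mul, ← mul_kronecker_mul, hf, hg, smul_kronecker, kronecker_smul,
    one_kronecker_one, smul_smul]
end

section
/- Let R be a commutative ring. Let φ, ψ, θ be n₁×n₁ matrices, φ', ψ', θ' be n₂×n₂ matrices over R, and let σ, ρ, ζ be m₁×m₁ matrices and σ', ρ', ζ' be m₂×m₂ matrices over R. Suppose (α_f, β_f, δ_f) is a triple of n₂×n₁ matrices satisfying α_f * φ = φ' * β_f, ψ' * δ_f = β_f * ψ, and δ_f * θ = θ' * α_f, and (α_g, β_g, δ_g) is a triple of m₂×m₁ matrices satisfying α_g * σ = σ' * β_g, ρ' * δ_g = β_g * ρ, and δ_g * ζ = ζ' * α_g. Then the triple of Kronecker products (α_f ⊗ α_g, β_f ⊗ β_g, δ_f ⊗ δ_g) satisfies: (α_f ⊗ α_g) * (φ ⊗ σ) = (φ' ⊗ σ') * (β_f ⊗ β_g), (ψ' ⊗ ρ') * (δ_f ⊗ δ_g) = (β_f ⊗ β_g) * (ψ ⊗ ρ), and (δ_f ⊗ δ_g) * (θ ⊗ ζ) = (θ' ⊗ ζ') * (α_f ⊗ α_g). -/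
open Matrix Kronecker

/-- The multiplicative tensor product of two morphisms of 3-matrix factorizations,
taken componentwise via the Kronecker product, satisfies the three commutation
identities defining a morphism of 3-matrix factorizations. -/
theorem kronecker_morphism_three_matrix_factorization
    {R : Type*} [CommRing R] {n₁ n₂ m₁ m₂ : ℕ}
    (φ ψ θ : Matrix (Fin n₁) (Fin n₁) R)
    (φ' ψ' θ' : Matrix (Fin n₂) (Fin n₂) R)
    (σ ρ ζ : Matrix (Fin m₁) (Fin m₁) R)
    (σ' ρ' ζ' : Matrix (Fin m₂) (Fin m₂) R)
    (αf βf δf : Matrix (Fin n₂) (Fin n₁) R)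
    (αg βg δg : Matrix (Fin m₂) (Fin m₁) R)
    (hf1 : αf * φ = φ' * βf) (hf2 : ψ' * δf = βf * ψ) (hf3 : δf * θ = θ' * αf)
    (hg1 : αg * σ = σ' * βg) (hg2 : ρ' * δg = βg * ρ) (hg3 : δg * ζ = ζ' * αg) :
    (αf ⊗ₖ αg) * (φ ⊗ₖ σ) = (φ' ⊗ₖ σ') * (βf ⊗ₖ βg) ∧
    (ψ' ⊗ₖ ρ') * (δf ⊗ₖ δg) = (βf ⊗ₖ βg) * (ψ ⊗ₖ ρ) ∧
    (δf ⊗ₖ δg) * (θ ⊗ₖ ζ) = (θ' ⊗ₖ ζ') * (αf ⊗ₖ αg) := by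
  simp only [← Matrix.mul_kronecker_mul, hf1, hf2, hf3, hg1, hg2, hg3, and_self]
end
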